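/- The G-invariant 1-forms, i.e., the elements f₁y₁ + f₂y₂ + f₃y₃ of R (fₛ ∈ S) fixed by every g ∈ G, form a free A-module with basis {c₁, c₂, c₃, c₄, c₅, c₆}: every such G-invariant 1-form is uniquely an A-linear combination of c₁,…,c₆. -/

import Mathlib

open Matrix MvPolynomial

set_option synthInstance.maxHeartbeats 1000000
set_option maxHeartbeats 1000000

abbrev F3 : Type := ZMod 3
abbrev G3 : Type := Matrix.SpecialLinearGroup (Fin 2) F3
abbrev S3 : Type := MvPolynomial (Fin 3) F3

/-- The fixed basis `v₁, v₂, v₃` of the traceless `2 × 2` matrices over `𝔽₃`. -/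
def V : Fin 3 → Matrix (Fin 2) (Fin 2) F3 :=
  ![!![0, 1; -1, 0], !![-1, -1; -1, 1], !![1, -1; -1, -1]]

/-- Coordinates of a traceless matrix with respect to the basis `v₁, v₂, v₃`. -/
def coordM : Fin 3 → Matrix (Fin 2) (Fin 2) F3 → F3 :=
  ![fun X => X 1 0 - X 0 1, fun X => X 0 0 - X 0 1 - X 1 0, fun X => -(X 0 0 + X 0 1 + X 1 0)]

/-- Matrix of the (dual) action of `g` on `M*`: `g • x_s = ∑ r, (rep g) s r • x_r`, where
`(rep g) s r = x_s (g⁻¹ • v_r) = coordM s (g⁻¹ vᵣ g)`, coming from `(g • f)(v) = f(g⁻¹ • v)`. -/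
def rep (g : G3) : Matrix (Fin 3) (Fin 3) F3 :=
  Matrix.of fun s r => coordM s ((g⁻¹ : G3) * V r * (g : Matrix (Fin 2) (Fin 2) F3))

/-- The action of `g ∈ SL₂(𝔽₃)` on `S = 𝔽₃[x₁,x₂,x₃]` by algebra automorphisms, given by
substituting `x_s ↦ g • x_s = ∑ r, (rep g) s r • x_r`. -/
noncomputable def actS (g : G3) : S3 →ₐ[F3] S3 :=
  MvPolynomial.aeval fun s => ∑ r : Fin 3, rep g s r • MvPolynomial.X r

noncomputable def a1 : S3 := X 0 ^ 2 + X 1 ^ 2 + X 2 ^ 2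
noncomputable def a2 : S3 := X 0 * X 1 * X 2
noncomputable def a3 : S3 := X 0 ^ 4 + X 1 ^ 4 + X 2 ^ 4
noncomputable def bP : S3 := X 0 ^ 4 * X 1 ^ 2 + X 0 ^ 2 * X 2 ^ 4 + X 1 ^ 4 * X 2 ^ 2
noncomputable def av : Fin 3 → S3 := ![a1, a2, a3]

def tm : G3 := ⟨!![1, 1; 0, 1], by decide⟩
def im : G3 := ⟨!![0, 1; -1, 0], by decide⟩
def jm : G3 := ⟨!![1, -1; -1, -1], by decide⟩

/-- The quaternion subgroup `H = ⟨i, j⟩ ≅ Q₈` of `SL₂(𝔽₃)`. -/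
def H3 : Subgroup G3 := Subgroup.closure {im, jm}

/-- The character with `χ(±e) = χ(±i) = 1` and `χ(±j) = χ(±k) = -1` (its values off the
set `{±e, ±i}` are `-1`; only the restriction to `H` is ever used). -/
def chi (g : G3) : F3 :=
  if (g : Matrix (Fin 2) (Fin 2) F3) = 1 ∨ (g : Matrix (Fin 2) (Fin 2) F3) = -1 ∨
     (g : Matrix (Fin 2) (Fin 2) F3) = (im : Matrix (Fin 2) (Fin 2) F3) ∨
     (g : Matrix (Fin 2) (Fin 2) F3) = -(im : Matrix (Fin 2) (Fin 2) F3) then 1 else -1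

/-- The `𝔽₃`-submodule `S^H_χ` of `χ`-relative `H`-invariants in `S`. -/
noncomputable def relInv : Submodule F3 S3 where
  carrier := {f | ∀ h ∈ H3, actS h f = chi h • f}
  add_mem' := by
    intro f g hf hg h hh
    rw [map_add, hf h hh, hg h hh, smul_add]
  zero_mem' := by
    intro h hh
    rw [map_zero, smul_zero]
  smul_mem' := by
    intro c f hf h hh
    rw [_root_.map_smul, hf h hh, smul_comm]

open TensorProduct

/-- The exterior algebra `Λ(M*)` on `y₁, y₂, y₃` (with `M*` in dual-basis coordinates). -/
abbrev Lam : Type := ExteriorAlgebra F3 (Fin 3 → F3)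

/-- `y_s = dx_s`, the exterior generators. -/
noncomputable def yy (s : Fin 3) : Lam := ExteriorAlgebra.ι F3 (Pi.single s 1)

/-- The linear action of `g` on the coordinate space of `y₁, y₂, y₃`:
`y_s ↦ ∑ r, (rep g) s r • y_r`. -/
noncomputable def repL (g : G3) : (Fin 3 → F3) →ₗ[F3] (Fin 3 → F3) :=
  Matrix.toLin' (rep g)ᵀ

/-- The algebra of differential forms `R = S ⊗ Λ(M*)`: the graded-commutative `𝔽₃`-algebra
generated by the central `x₁, x₂, x₃` and the anticommuting `y₁, y₂, y₃`. -/
abbrev Rf : Type := S3 ⊗[F3] Lam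

/-- The action of `g ∈ SL₂(𝔽₃)` on `R` by ring automorphisms, acting on `x`'s as on `S`
and on `y₁, y₂, y₃` by the same matrices as on `x₁, x₂, x₃`. -/
noncomputable def actR (g : G3) : Rf →ₐ[F3] Rf :=
  Algebra.TensorProduct.map (actS g) (ExteriorAlgebra.map (repL g))

noncomputable def c1 : Rf := X 0 ⊗ₜ[F3] yy 0 + X 1 ⊗ₜ[F3] yy 1 + X 2 ⊗ₜ[F3] yy 2
noncomputable def c2 : Rf :=
  (X 1 * X 2) ⊗ₜ[F3] yy 0 + (X 2 * X 0) ⊗ₜ[F3] yy 1 + (X 0 * X 1) ⊗ₜ[F3] yy 2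
noncomputable def c3 : Rf :=
  (X 0 ^ 3) ⊗ₜ[F3] yy 0 + (X 1 ^ 3) ⊗ₜ[F3] yy 1 + (X 2 ^ 3) ⊗ₜ[F3] yy 2
noncomputable def c4 : Rf :=
  (X 0 * X 1 ^ 2) ⊗ₜ[F3] yy 0 + (X 1 * X 2 ^ 2) ⊗ₜ[F3] yy 1 + (X 2 * X 0 ^ 2) ⊗ₜ[F3] yy 2
noncomputable def c5 : Rf :=
  (X 1 ^ 3 * X 2) ⊗ₜ[F3] yy 0 + (X 2 ^ 3 * X 0) ⊗ₜ[F3] yy 1 + (X 0 ^ 3 * X 1) ⊗ₜ[F3] yy 2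
noncomputable def c6 : Rf :=
  (X 0 ^ 3 * X 1 ^ 2) ⊗ₜ[F3] yy 0 + (X 1 ^ 3 * X 2 ^ 2) ⊗ₜ[F3] yy 1 +
    (X 2 ^ 3 * X 0 ^ 2) ⊗ₜ[F3] yy 2

noncomputable def d1 : Rf :=
  X 0 ⊗ₜ[F3] (yy 1 * yy 2) + X 1 ⊗ₜ[F3] (yy 2 * yy 0) + X 2 ⊗ₜ[F3] (yy 0 * yy 1)
noncomputable def d2 : Rf :=
  (X 1 * X 2) ⊗ₜ[F3] (yy 1 * yy 2) + (X 2 * X 0) ⊗ₜ[F3] (yy 2 * yy 0) +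
    (X 0 * X 1) ⊗ₜ[F3] (yy 0 * yy 1)
noncomputable def d3 : Rf :=
  (X 0 ^ 3) ⊗ₜ[F3] (yy 1 * yy 2) + (X 1 ^ 3) ⊗ₜ[F3] (yy 2 * yy 0) +
    (X 2 ^ 3) ⊗ₜ[F3] (yy 0 * yy 1)
noncomputable def d4 : Rf :=
  (X 0 * X 1 ^ 2) ⊗ₜ[F3] (yy 1 * yy 2) + (X 1 * X 2 ^ 2) ⊗ₜ[F3] (yy 2 * yy 0) +
    (X 2 * X 0 ^ 2) ⊗ₜ[F3] (yy 0 * yy 1)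
noncomputable def d5 : Rf :=
  (X 1 ^ 3 * X 2) ⊗ₜ[F3] (yy 1 * yy 2) + (X 2 ^ 3 * X 0) ⊗ₜ[F3] (yy 2 * yy 0) +
    (X 0 ^ 3 * X 1) ⊗ₜ[F3] (yy 0 * yy 1)
noncomputable def d6 : Rf :=
  (X 0 ^ 3 * X 1 ^ 2) ⊗ₜ[F3] (yy 1 * yy 2) + (X 1 ^ 3 * X 2 ^ 2) ⊗ₜ[F3] (yy 2 * yy 0) +
    (X 2 ^ 3 * X 0 ^ 2) ⊗ₜ[F3] (yy 0 * yy 1)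

/-- The top form `y₁y₂y₃`. -/
noncomputable def y123 : Lam := yy 0 * yy 1 * yy 2

noncomputable def cvec : Fin 6 → Rf := ![c1, c2, c3, c4, c5, c6]

/-- The set of `1`-forms `f₁y₁ + f₂y₂ + f₃y₃` with `fₛ ∈ S`. -/
def oneForms : Set Rf :=
  {z | ∃ f₁ f₂ f₃ : S3, z = f₁ ⊗ₜ[F3] yy 0 + f₂ ⊗ₜ[F3] yy 1 + f₃ ⊗ₜ[F3] yy 2}

/-- `Φ(p₁,…,p₆) = ∑ᵢ pᵢ(a₁,a₂,a₃)·cᵢ`. -/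
noncomputable def Phi10 (p : Fin 6 → MvPolynomial (Fin 3) F3) : Rf :=
  ∑ i : Fin 6, (aeval av (p i) ⊗ₜ[F3] (1 : Lam)) * cvec i

/-!
An element of `G` permutes `x₁, x₂, x₃` cyclically and changes signs by a vector `e` with
`e₁e₂e₃ = 1`, and every such signed rotation occurs. Hence (Frobenius reciprocity) an invariant
`1`-form is determined by its first coefficient `u`, and the coefficients that occur are those with
`u(e₁x₁, e₂x₂, e₃x₃) = e₁ u`, i.e. the space `S^H_χ`.

Such a `u` is a combination of monomials `x₁ᵃx₂ᵇx₃ᶜ` with `b + c` even and `a + b` odd, that is,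
`x₁` or `x₂x₃` times a monomial in the squares. The squares are the roots of the cubic
`T³ - a₁T² + e₂T - a₂²`, where `e₂ = a₃ - a₁²` in characteristic `3`. Therefore multiplication by
them preserves the `A`-span of the first coefficients of `c₁, …, c₆`, and `a₁, a₂, a₃` are
algebraically independent.

For the linear independence, group a relation as
`(p x₁ + q x₂x₃ + r x₁³) + x₂² (p' x₁ + q' x₂x₃ + r' x₁³) = 0`. Exchanging `x₂` and `x₃` shows that
both brackets vanish, and the rotations of a vanishing bracket form a Vandermonde system for its
coefficients.
-/

section Relations

variable {A T : Type*} [CommRing A] [CommRing T] [Algebra A T]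

/-- The coefficients of `y₁` in `c₁, …, c₆`, with `x₁, x₂, x₃` replaced by elements `x, y, z` of
an arbitrary commutative ring. -/
def relGens (x y z : T) : Fin 6 → T :=
  ![x, y * z, x ^ 3, x * y ^ 2, y ^ 3 * z, x ^ 3 * y ^ 2]

theorem map_relGens {F U : Type*} [CommRing U] [FunLike F T U] [RingHomClass F T U] (φ : F)
    (x y z : T) (i : Fin 6) : φ (relGens x y z i) = relGens (φ x) (φ y) (φ z) i := by
  fin_cases i <;> simp [relGens]

theorem relGens_mul_of_mul_eq_one {a b c : T} (ha : a ^ 2 = 1) (hb : b ^ 2 = 1)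
    (habc : a * b * c = 1) (x y z : T) (i : Fin 6) :
    relGens (a * x) (b * y) (c * z) i = a * relGens x y z i := by
  have hbc : b * c = a := by linear_combination a * habc - b * c * ha
  fin_cases i <;> simp only [relGens, Fin.zero_eta, Fin.mk_one, Fin.reduceFinMk, cons_val]
  · linear_combination y * z * hbc
  · linear_combination a * x ^ 3 * ha
  · linear_combination a * x * y ^ 2 * hb
  · linear_combination y ^ 3 * z * (b * c * hb + hbc)
  · linear_combination x ^ 3 * y ^ 2 * (a * b ^ 2 * ha + a * hb)

section Span

theorem mapsTo_mul_span_of_matrix {κ : Type*} [Fintype κ] {g : κ → T} {w : T} (M : Matrix κ κ A)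
    (h : ∀ i, ∑ j, M i j • g j = w * g i) :
    Set.MapsTo (w * ·) (Submodule.span A (Set.range g) : Set T)
      (Submodule.span A (Set.range g)) := by
  have hle : Submodule.span A (Set.range g) ≤
      (Submodule.span A (Set.range g)).comap (LinearMap.mulLeft A w) :=
    Submodule.span_le.2 <| Set.range_subset_iff.2 fun i =>
      (Submodule.mem_span_range_iff_exists_fun A).2 ⟨M i, h i⟩
  exact fun f hf => hle hf

variable {x y z : T} {e₁ e₂ m : A} (h₁ : algebraMap A T e₁ = x ^ 2 + y ^ 2 + z ^ 2)
  (h₂ : algebraMap A T e₂ = x ^ 2 * y ^ 2 + x ^ 2 * z ^ 2 + y ^ 2 * z ^ 2)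
  (h₃ : algebraMap A T m = x * y * z)

include h₁ h₂ h₃

theorem isIntegral_of_algebraMap_esymm_sq : IsIntegral A x := by
  refine .of_pow (n := 2) two_pos ⟨.X ^ 3 - .C e₁ * .X ^ 2 + .C e₂ * .X - .C (m ^ 2), ?_, ?_⟩
  · monicity!
  · simp only [Polynomial.eval₂_sub, Polynomial.eval₂_add, Polynomial.eval₂_mul,
      Polynomial.eval₂_pow, Polynomial.eval₂_X, Polynomial.eval₂_C, map_pow, h₁, h₂, h₃]
    ring

theorem mapsTo_sq_left_mul_span_relGens :
    Set.MapsTo (x ^ 2 * ·) (Submodule.span A (Set.range (relGens x y z)) : Set T)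
      (Submodule.span A (Set.range (relGens x y z))) := by
  -- The row `i` expresses `x² * relGens x y z i` in the generators, using that `x²` is a root of
  -- `T³ - e₁T² + e₂T - m²`.
  let M : Matrix (Fin 6) (Fin 6) A := !![
    0, 0, 1, 0, 0, 0;
    m, 0, 0, 0, 0, 0;
    -e₂, m, e₁, 0, 0, 0;
    0, 0, 0, 0, 0, 1;
    0, 0, 0, m, 0, 0;
    0, 0, 0, -e₂, m, e₁]
  refine mapsTo_mul_span_of_matrix M fun i => ?_
  fin_cases i <;> simp only [M, relGens, Fin.sum_univ_six, Algebra.smul_def, Fin.zero_eta,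
    Fin.mk_one, Fin.reduceFinMk, of_apply, cons_val, map_zero, map_one, map_neg,
    h₁, h₂, h₃] <;> ring

theorem mapsTo_sq_mid_mul_span_relGens :
    Set.MapsTo (y ^ 2 * ·) (Submodule.span A (Set.range (relGens x y z)) : Set T)
      (Submodule.span A (Set.range (relGens x y z))) := by
  let M : Matrix (Fin 6) (Fin 6) A := !![
    0, 0, 0, 1, 0, 0;
    0, 0, 0, 0, 1, 0;
    0, 0, 0, 0, 0, 1;
    0, -m, 0, e₁, 0, -1;
    e₁ * m, -e₂, -m, -m, e₁, 0;
    -m ^ 2, 0, 0, e₂, -m, 0]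
  refine mapsTo_mul_span_of_matrix M fun i => ?_
  fin_cases i <;> simp only [M, relGens, Fin.sum_univ_six, Algebra.smul_def, Fin.zero_eta,
    Fin.mk_one, Fin.reduceFinMk, of_apply, cons_val, map_zero, map_one, map_neg, map_mul, map_pow,
    h₁, h₂, h₃] <;> ring

theorem mapsTo_sq_right_mul_span_relGens :
    Set.MapsTo (z ^ 2 * ·) (Submodule.span A (Set.range (relGens x y z)) : Set T)
      (Submodule.span A (Set.range (relGens x y z))) := by
  intro f hf
  have hz : z ^ 2 * f = e₁ • f - x ^ 2 * f - y ^ 2 * f := by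
    rw [Algebra.smul_def, h₁]
    ring
  simp only [hz]
  exact sub_mem (sub_mem (Submodule.smul_mem _ _ hf) (mapsTo_sq_left_mul_span_relGens h₁ h₂ h₃ hf))
    (mapsTo_sq_mid_mul_span_relGens h₁ h₂ h₃ hf)

theorem sq_pow_mul_mem_span_relGens {f : T}
    (hf : f ∈ Submodule.span A (Set.range (relGens x y z))) (a b c : ℕ) :
    (x ^ 2) ^ a * ((y ^ 2) ^ b * ((z ^ 2) ^ c * f)) ∈
      Submodule.span A (Set.range (relGens x y z)) := by
  have hx := (mapsTo_sq_left_mul_span_relGens h₁ h₂ h₃).iterate a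
  have hy := (mapsTo_sq_mid_mul_span_relGens h₁ h₂ h₃).iterate b
  have hz := (mapsTo_sq_right_mul_span_relGens h₁ h₂ h₃).iterate c
  rw [mul_left_iterate] at hx hy hz
  exact hx (hy (hz hf))

theorem monomial_mem_span_relGens {a b c : ℕ} (hbc : Even (b + c)) (hab : Odd (a + b)) :
    x ^ a * y ^ b * z ^ c ∈ Submodule.span A (Set.range (relGens x y z)) := by
  obtain ⟨b', rfl | rfl⟩ := b.even_or_odd'
  · obtain ⟨a, rfl⟩ : Odd a := by grind
    obtain ⟨c, rfl⟩ : Even c := by grind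
    convert sq_pow_mul_mem_span_relGens h₁ h₂ h₃ (f := x) (Submodule.subset_span ⟨0, rfl⟩) a b' c
      using 1
    ring
  · obtain ⟨a, rfl⟩ : Even a := by grind
    obtain ⟨c, rfl⟩ : Odd c := by grind
    convert sq_pow_mul_mem_span_relGens h₁ h₂ h₃ (f := y * z) (Submodule.subset_span ⟨1, rfl⟩)
      a b' c using 1
    ring

end Span

section LinearIndependence

theorem injective_sq_of_rotation {F : Type*} [FunLike F T T] [RingHomClass F T T] {ρ : F}
    {x y z : T} (hx : ρ x = y) (hy : ρ y = z) (hz : ρ z = x) (hxy : x ^ 2 ≠ y ^ 2) :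
    Function.Injective ![x ^ 2, y ^ 2, z ^ 2] := by
  have hyz : y ^ 2 ≠ z ^ 2 := fun h => hxy <| by
    have h' := congrArg ρ h
    rw [map_pow, map_pow, hy, hz] at h'
    exact h'.symm.trans h.symm
  have hxz : x ^ 2 ≠ z ^ 2 := fun h => hxy <| by
    have h' := congrArg ρ h
    rw [map_pow, map_pow, hx, hz] at h'
    exact h'.symm
  intro i j
  fin_cases i <;> fin_cases j <;> simp [hxy, hyz, hxz, hxy.symm, hyz.symm, hxz.symm]

variable [IsDomain T] [FaithfulSMul A T] {x y z : T} {ρ τ : T →ₐ[A] T} (hx : ρ x = y)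
  (hy : ρ y = z) (hz : ρ z = x) (hxy : x ^ 2 ≠ y ^ 2)

include hx hy hz hxy

-- Multiplied by `x`, a relation says that a quadratic polynomial with rotation-invariant
-- coefficients vanishes at `x²`, hence also at `y²` and `z²`.
theorem coeffs_eq_zero_of_rotation {p q r : A} (h : p • x + q • (y * z) + r • x ^ 3 = 0) :
    p = 0 ∧ q = 0 ∧ r = 0 := by
  have h' : p • y + q • (z * x) + r • y ^ 3 = 0 := by simpa [hx, hy, hz] using congrArg ρ h
  have h'' : p • z + q • (x * y) + r • z ^ 3 = 0 := by simpa [hx, hy, hz] using congrArg ρ h'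
  have hx0 : x ≠ 0 := fun h0 => hxy (by rw [← hx, h0, map_zero])
  have hz0 : z ≠ 0 := fun h0 => hx0 (by rw [← hz, h0, map_zero])
  have hy0 : y ≠ 0 := fun h0 => hz0 (by rw [← hy, h0, map_zero])
  simp only [Algebra.smul_def] at h h' h''
  have hcoeff : ![algebraMap A T q * (x * y * z), algebraMap A T p, algebraMap A T r] = 0 :=
    eq_zero_of_forall_index_sum_pow_mul_eq_zero (injective_sq_of_rotation hx hy hz hxy) fun j => by
      fin_cases j <;> simp only [Fin.sum_univ_three, Fin.zero_eta, Fin.mk_one, Fin.reduceFinMk,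
        cons_val, Fin.coe_ofNat_eq_mod]
      · linear_combination x * h
      · linear_combination y * h'
      · linear_combination z * h''
  have hinj := FaithfulSMul.algebraMap_injective A T
  exact ⟨(map_eq_zero_iff _ hinj).1 (congrFun hcoeff 1),
    (map_eq_zero_iff _ hinj).1 ((mul_eq_zero.1 (congrFun hcoeff 0)).resolve_right
      (mul_ne_zero (mul_ne_zero hx0 hy0) hz0)),
    (map_eq_zero_iff _ hinj).1 (congrFun hcoeff 2)⟩

theorem linearIndependent_relGens (hτx : τ x = x) (hτy : τ y = z) (hτz : τ z = y) :
    LinearIndependent A (relGens x y z) := by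
  have hyz : y ^ 2 ≠ z ^ 2 :=
    (injective_sq_of_rotation hx hy hz hxy).ne (show (1 : Fin 3) ≠ 2 by decide)
  rw [Fintype.linearIndependent_iff]
  intro g hg
  let u : T := g 0 • x + g 1 • (y * z) + g 2 • x ^ 3
  let v : T := g 3 • x + g 4 • (y * z) + g 5 • x ^ 3
  have hτu : τ u = u := by simp [u, hτx, hτy, hτz, mul_comm z y]
  have hτv : τ v = v := by simp [v, hτx, hτy, hτz, mul_comm z y]
  have huv : u + y ^ 2 * v = 0 := by
    rw [← hg]
    simp only [u, v, relGens, Fin.sum_univ_six, Algebra.smul_def, cons_val]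
    ring
  have huv' : u + z ^ 2 * v = 0 := by simpa [hτu, hτv, hτy] using congrArg τ huv
  have hv : v = 0 :=
    (mul_eq_zero.1 (by linear_combination huv - huv')).resolve_left (sub_ne_zero.2 hyz)
  have hu : u = 0 := by rwa [hv, mul_zero, add_zero] at huv
  obtain ⟨h0, h1, h2⟩ := coeffs_eq_zero_of_rotation hx hy hz hxy hu
  obtain ⟨h3, h4, h5⟩ := coeffs_eq_zero_of_rotation hx hy hz hxy hv
  intro i
  fin_cases i
  exacts [h0, h1, h2, h3, h4, h5]

end LinearIndependence

end Relations

section AlgebraicIndependence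

variable {k ι κ S : Type*} [CommRing k]

theorem algebraicIndependent_of_isAlgebraic_X [IsDomain k] [Finite ι] {v : ι → MvPolynomial ι k}
    (hv : ∀ i, IsAlgebraic (Algebra.adjoin k (Set.range v)) (X i : MvPolynomial ι k)) :
    AlgebraicIndependent k v := by
  have : Algebra.IsAlgebraic (Algebra.adjoin k (Set.range v)) (MvPolynomial ι k) := ⟨fun f => by
    induction f using MvPolynomial.induction_on with
    | C a => exact isAlgebraic_algebraMap (algebraMap k (Algebra.adjoin k (Set.range v)) a)
    | add p q hp hq => exact hp.add hq
    | mul_X p i hp => exact hp.mul (hv i)⟩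
  exact (Algebra.IsAlgebraic.isTranscendenceBasis_of_lift_le_trdeg_of_finite k v
    (by simp [MvPolynomial.trdeg_of_isDomain])).1

variable [CommRing S] [Algebra k S] {v : ι → S}

/-- An algebra endomorphism fixing every `v i`, as an endomorphism over `k[v]`. -/
def algHomOverAdjoin (φ : S →ₐ[k] S) (hφ : ∀ i, φ (v i) = v i) :
    S →ₐ[Algebra.adjoin k (Set.range v)] S where
  toRingHom := φ
  commutes' a := AlgHom.eqOn_adjoin_iff (ψ := AlgHom.id k S).2 (Set.forall_mem_range.2 hφ) a.2

variable [Fintype κ] {g : κ → S}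

theorem range_sum_aeval_mul :
    Set.range (fun p : κ → MvPolynomial ι k => ∑ i, aeval v (p i) * g i) =
      (Submodule.span (Algebra.adjoin k (Set.range v)) (Set.range g) : Set S) := by
  ext f
  rw [SetLike.mem_coe, Submodule.mem_span_range_iff_exists_fun]
  constructor
  · rintro ⟨p, rfl⟩
    exact ⟨fun i => ⟨aeval v (p i), Algebra.adjoin_range_eq_range_aeval k v ▸ ⟨p i, rfl⟩⟩, rfl⟩
  · rintro ⟨c, rfl⟩
    have hc (i : κ) : ∃ p : MvPolynomial ι k, aeval v p = (c i : S) := by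
      simpa [Algebra.adjoin_range_eq_range_aeval] using (c i).2
    choose p hp using hc
    exact ⟨p, by simp only [hp, Algebra.smul_def]; rfl⟩

theorem injective_sum_aeval_mul (hv : AlgebraicIndependent k v)
    (hg : LinearIndependent (Algebra.adjoin k (Set.range v)) g) :
    Function.Injective fun p : κ → MvPolynomial ι k => ∑ i, aeval v (p i) * g i := by
  intro p q h
  funext i
  have hinj := linearIndependent_iff_injective_fintypeLinearCombination.1 hg
  refine hv.aevalEquiv.injective (congrFun (hinj (a₁ := fun i => hv.aevalEquiv (p i))
    (a₂ := fun i => hv.aevalEquiv (q i)) ?_) i)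
  simpa [Fintype.linearCombination_apply, Algebra.smul_def] using h

end AlgebraicIndependence

section Signs

variable {σ τ k : Type*} [CommRing k]

/-- The substitution `X s ↦ e s * X s`. -/
noncomputable def scaleVars (e : σ → k) : MvPolynomial σ k →ₐ[k] MvPolynomial σ k :=
  aeval fun s => C (e s) * X s

@[simp]
theorem scaleVars_X (e : σ → k) (s : σ) : scaleVars e (X s) = C (e s) * X s :=
  aeval_X _ s

theorem coeff_scaleVars (e : σ → k) (m : σ →₀ ℕ) (f : MvPolynomial σ k) :
    coeff m (scaleVars e f) = (m.prod fun s n => e s ^ n) * coeff m f := by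
  classical
  induction f using MvPolynomial.induction_on' with
  | add p q hp hq => simp only [map_add, coeff_add, hp, hq, mul_add]
  | monomial n a =>
    have h : scaleVars e (monomial n a) = monomial n ((n.prod fun s j => e s ^ j) * a) := by
      simp only [monomial_eq, map_mul, map_finsuppProd, map_pow, scaleVars_X, mul_pow,
        Finsupp.prod_mul, algHom_C, algebraMap_eq]
      ring
    rw [h, coeff_monomial, coeff_monomial]
    split_ifs with hnm <;> simp [hnm]

theorem scaleVars_rename (e : τ → k) (ρ : σ → τ) (f : MvPolynomial σ k) :
    scaleVars e (rename ρ f) = rename ρ (scaleVars (e ∘ ρ) f) := by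
  rw [← AlgHom.comp_apply, ← AlgHom.comp_apply]
  congr 1
  ext s
  simp

/-- A sign change of the coordinates with determinant `1`. -/
def IsEvenSign [Fintype σ] (e : σ → k) : Prop :=
  (∀ s, e s ^ 2 = 1) ∧ ∏ s, e s = 1

instance [Fintype σ] [DecidableEq k] (e : σ → k) : Decidable (IsEvenSign e) :=
  inferInstanceAs (Decidable (_ ∧ _))

theorem IsEvenSign.comp_equiv [Fintype σ] [Fintype τ] {e : τ → k} (he : IsEvenSign e)
    (ρ : σ ≃ τ) : IsEvenSign (e ∘ ρ) :=
  ⟨fun s => he.1 (ρ s), (Equiv.prod_comp ρ e).trans he.2⟩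

theorem IsEvenSign.map [Fintype σ] {k' : Type*} [CommRing k'] {e : σ → k} (he : IsEvenSign e)
    (φ : k →+* k') : IsEvenSign fun s => φ (e s) :=
  ⟨fun s => by simp only [← map_pow, he.1, map_one],
    by simp only [← map_prod, he.2, map_one]⟩

theorem IsEvenSign.mul_mul_eq_one {e : Fin 3 → k} (he : IsEvenSign e) : e 0 * e 1 * e 2 = 1 := by
  rw [← Fin.prod_univ_three, he.2]

theorem even_and_odd_of_scaleVars_eq [NoZeroDivisors k] (h2 : (2 : k) ≠ 0)
    {f : MvPolynomial (Fin 3) k}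
    (h : ∀ e : Fin 3 → k, IsEvenSign e → scaleVars e f = e 0 • f)
    {m : Fin 3 →₀ ℕ} (hm : m ∈ f.support) : Even (m 1 + m 2) ∧ Odd (m 0 + m 1) := by
  have hcoeff (e : Fin 3 → k) (he : IsEvenSign e) :
      (e 0 ^ m 0 * e 1 ^ m 1 * e 2 ^ m 2) = e 0 := by
    refine mul_right_cancel₀ (mem_support_iff.1 hm) ?_
    have := congrArg (coeff m) (h e he)
    rwa [coeff_scaleVars, coeff_smul, Finsupp.prod_fintype _ _ (by simp), Fin.prod_univ_three,
      smul_eq_mul] at this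
  have hneg : (-1 : k) ≠ 1 := fun h => h2 (by linear_combination -h)
  have h₁ := hcoeff ![1, -1, -1] ⟨by simp [Fin.forall_fin_succ], by simp [Fin.prod_univ_three]⟩
  have h₂ := hcoeff ![-1, -1, 1] ⟨by simp [Fin.forall_fin_succ], by simp [Fin.prod_univ_three]⟩
  simp only [cons_val, cons_val_zero, cons_val_one, one_pow, one_mul, mul_one, ← pow_add] at h₁ h₂
  constructor
  · by_contra hodd
    exact hneg (by rwa [(Nat.not_even_iff_odd.1 hodd).neg_one_pow] at h₁)
  · by_contra heven
    exact hneg (by rw [← h₂, (Nat.not_odd_iff_even.1 heven).neg_one_pow])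

end Signs

/-- The monomial matrix of the substitution `x_s ↦ e s * x_{s+σ}`. -/
def signedShift (σ : Fin 3) (e : Fin 3 → F3) : Matrix (Fin 3) (Fin 3) F3 :=
  of fun s r => if r = s + σ then e s else 0

theorem exists_rep_eq_signedShift (g : G3) : ∃ σ e, IsEvenSign e ∧ rep g = signedShift σ e := by
  revert g
  decide +kernel

theorem exists_rep_eq_of_isEvenSign (σ : Fin 3) {e : Fin 3 → F3} (he : IsEvenSign e) :
    ∃ g, rep g = signedShift σ e := by
  revert σ e
  decide +kernel

theorem exists_mem_H3_rep_eq {e : Fin 3 → F3} (he : IsEvenSign e) :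
    ∃ h ∈ H3, rep h = signedShift 0 e ∧ chi h = e 0 := by
  have hi : im ∈ H3 := Subgroup.subset_closure (by simp)
  have hj : jm ∈ H3 := Subgroup.subset_closure (by simp)
  have key : ∀ e : Fin 3 → F3, IsEvenSign e → ∃ h : G3, (h = 1 ∨ h = im ∨ h = jm ∨ h = im * jm) ∧
      rep h = signedShift 0 e ∧ chi h = e 0 := by decide +kernel
  obtain ⟨h, rfl | rfl | rfl | rfl, hh⟩ := key e he
  exacts [⟨1, one_mem _, hh⟩, ⟨im, hi, hh⟩, ⟨jm, hj, hh⟩, ⟨im * jm, mul_mem hi hj, hh⟩]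

theorem exists_rep_eq_of_mem_H3 {h : G3} (hh : h ∈ H3) :
    ∃ e, IsEvenSign e ∧ rep h = signedShift 0 e ∧ chi h = e 0 := by
  have key : ∀ h : G3, (∃ e, IsEvenSign e ∧ rep h = signedShift 0 e ∧ chi h = e 0) →
      ∀ y ∈ [im, jm, im⁻¹, jm⁻¹],
        ∃ e, IsEvenSign e ∧ rep (h * y) = signedShift 0 e ∧ chi (h * y) = e 0 := by
    decide +kernel
  induction hh using Subgroup.closure_induction_right with
  | one => decide +kernel
  | mul_right h _ y hy ih => exact key h ih y (by rcases hy with rfl | rfl <;> simp)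
  | mul_inv_cancel h _ y hy ih => exact key h ih y⁻¹ (by rcases hy with rfl | rfl <;> simp)

theorem rename_add_zero {σ k : Type*} [AddZeroClass σ] [CommSemiring k] (f : MvPolynomial σ k) :
    rename (· + 0) f = f := by
  simp only [add_zero]
  exact rename_id_apply f

theorem actS_of_rep_eq {g : G3} {σ : Fin 3} {e : Fin 3 → F3} (h : rep g = signedShift σ e)
    (f : S3) : actS g f = rename (· + σ) (scaleVars e f) := by
  rw [← AlgHom.comp_apply]
  congr 1
  ext s
  simp [actS, h, signedShift, smul_eq_C_mul]

theorem mem_relInv_iff {f : S3} :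
    f ∈ relInv ↔ ∀ e : Fin 3 → F3, IsEvenSign e → scaleVars e f = e 0 • f := by
  have hact {h : G3} {e : Fin 3 → F3} (hrep : rep h = signedShift 0 e) :
      actS h f = scaleVars e f := by
    rw [actS_of_rep_eq hrep, rename_add_zero]
  constructor
  · intro hf e he
    obtain ⟨h, hh, hrep, hchi⟩ := exists_mem_H3_rep_eq he
    rw [← hact hrep, hf h hh, hchi]
  · intro hf h hh
    obtain ⟨e, he, hrep, hchi⟩ := exists_rep_eq_of_mem_H3 hh
    rw [hact hrep, hf e he, hchi]

/-- The subalgebra `A = 𝔽₃[a₁, a₂, a₃]` of `S`. -/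
noncomputable abbrev adjoinAv : Subalgebra F3 S3 := Algebra.adjoin F3 (Set.range av)

theorem rename_equiv_av (ρ : Equiv.Perm (Fin 3)) (i : Fin 3) : rename ρ (av i) = av i := by
  fin_cases i
  · simpa [av, a1, Fin.sum_univ_three] using Equiv.sum_comp ρ fun s => (X s : S3) ^ 2
  · simpa [av, a2, Fin.prod_univ_three] using Equiv.prod_comp ρ fun s => (X s : S3)
  · simpa [av, a3, Fin.sum_univ_three] using Equiv.sum_comp ρ fun s => (X s : S3) ^ 4

theorem scaleVars_av {e : Fin 3 → F3} (he : IsEvenSign e) (i : Fin 3) :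
    scaleVars e (av i) = av i := by
  have hC : IsEvenSign fun s => (C (e s) : S3) := he.map C
  have hsq (s : Fin 3) : scaleVars e (X s ^ 2 : S3) = X s ^ 2 := by
    rw [map_pow, scaleVars_X]
    linear_combination X s ^ 2 * hC.1 s
  have hfour (s : Fin 3) : scaleVars e (X s ^ 4 : S3) = X s ^ 4 := by
    rw [pow_mul (X s) 2 2, map_pow, hsq]
  fin_cases i
  · simp only [av, a1, Fin.zero_eta, cons_val, map_add, hsq]
  · simp only [av, a2, Fin.mk_one, cons_val, map_mul, scaleVars_X]
    linear_combination X 0 * X 1 * X 2 * hC.mul_mul_eq_one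
  · simp only [av, a3, Fin.reduceFinMk, cons_val, map_add, hfour]

theorem exists_algebraMap_esymm_sq : ∃ e₁ e₂ m : adjoinAv,
    algebraMap adjoinAv S3 e₁ = X 0 ^ 2 + X 1 ^ 2 + X 2 ^ 2 ∧
    algebraMap adjoinAv S3 e₂ = X 0 ^ 2 * X 1 ^ 2 + X 0 ^ 2 * X 2 ^ 2 + X 1 ^ 2 * X 2 ^ 2 ∧
    algebraMap adjoinAv S3 m = X 0 * X 1 * X 2 := by
  let b (i : Fin 3) : adjoinAv := ⟨av i, Algebra.subset_adjoin ⟨i, rfl⟩⟩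
  refine ⟨b 0, b 2 - b 0 ^ 2, b 1, rfl, ?_, rfl⟩
  have h3 : (3 : S3) = 0 := CharP.cast_eq_zero S3 3
  change a3 - a1 ^ 2 = _
  rw [a1, a3]
  linear_combination
    -(X 0 ^ 2 * X 1 ^ 2 + X 0 ^ 2 * X 2 ^ 2 + X 1 ^ 2 * X 2 ^ 2) * h3

theorem isIntegral_adjoinAv_X (s : Fin 3) : IsIntegral adjoinAv (X s : S3) := by
  obtain ⟨e₁, e₂, m, h₁, h₂, h₃⟩ := exists_algebraMap_esymm_sq
  fin_cases s
  · exact isIntegral_of_algebraMap_esymm_sq h₁ h₂ h₃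
  · exact isIntegral_of_algebraMap_esymm_sq (x := X 1) (y := X 2) (z := X 0)
      (by rw [h₁]; ring) (by rw [h₂]; ring) (by rw [h₃]; ring)
  · exact isIntegral_of_algebraMap_esymm_sq (x := X 2) (y := X 0) (z := X 1)
      (by rw [h₁]; ring) (by rw [h₂]; ring) (by rw [h₃]; ring)

theorem algebraicIndependent_av : AlgebraicIndependent F3 av :=
  algebraicIndependent_of_isAlgebraic_X fun s => (isIntegral_adjoinAv_X s).isAlgebraic

theorem linearIndependent_relGens_X :
    LinearIndependent adjoinAv (relGens (X 0) (X 1) (X 2) : Fin 6 → S3) := by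
  let ρ := algHomOverAdjoin (rename (Equiv.addRight 1)) (rename_equiv_av (Equiv.addRight 1))
  let τ := algHomOverAdjoin (rename (Equiv.swap 1 2)) (rename_equiv_av (Equiv.swap 1 2))
  have hρ (s : Fin 3) : ρ (X s) = X (s + 1) := rename_X _ s
  have hτ (s : Fin 3) : τ (X s) = X (Equiv.swap 1 2 s) := rename_X _ s
  have hX : (X 0 ^ 2 : S3) ≠ X 1 ^ 2 := fun h => by
    simpa using congrArg (aeval (![1, 0, 0] : Fin 3 → F3)) h
  exact linearIndependent_relGens (hρ 0) (hρ 1) (hρ 2) hX (hτ 0) (hτ 1) (hτ 2)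

theorem span_relGens_X_eq_relInv :
    (Submodule.span adjoinAv (Set.range (relGens (X 0 : S3) (X 1) (X 2))) : Set S3) = relInv := by
  ext f
  rw [SetLike.mem_coe, SetLike.mem_coe, mem_relInv_iff]
  constructor
  · intro hf e he
    have hC : IsEvenSign fun s => (C (e s) : S3) := he.map C
    let φ := algHomOverAdjoin (scaleVars e) (scaleVars_av he)
    change φ f = _
    induction hf using Submodule.span_induction with
    | mem f hf =>
      obtain ⟨i, rfl⟩ := hf
      change scaleVars e _ = _
      rw [map_relGens, scaleVars_X, scaleVars_X, scaleVars_X, smul_eq_C_mul]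
      exact relGens_mul_of_mul_eq_one (hC.1 0) (hC.1 1) hC.mul_mul_eq_one _ _ _ _
    | zero => simp
    | add f g _ _ hf hg => rw [map_add, hf, hg, smul_add]
    | smul a f _ hf => rw [map_smul, hf, smul_comm]
  · intro hf
    obtain ⟨e₁, e₂, m, h₁, h₂, h₃⟩ := exists_algebraMap_esymm_sq
    rw [← support_sum_monomial_coeff f]
    refine sum_mem fun n hn => ?_
    obtain ⟨heven, hodd⟩ := even_and_odd_of_scaleVars_eq (by decide) hf hn
    rw [monomial_eq, ← smul_eq_C_mul, Finsupp.prod_fintype _ _ (by simp), Fin.prod_univ_three]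
    exact Submodule.smul_of_tower_mem _ _ (monomial_mem_span_relGens h₁ h₂ h₃ heven hodd)

/-- The `1`-form with coefficients `f`. -/
noncomputable def oneForm (f : Fin 3 → S3) : Rf := ∑ s, f s ⊗ₜ[F3] yy s

/-- The coefficient of `y_s` in the `1`-form part of an element of `R`. -/
noncomputable def oneFormCoeff (s : Fin 3) : Rf →ₗ[F3] S3 :=
  (TensorProduct.rid F3 S3).toLinearMap ∘ₗ
    LinearMap.lTensor S3 (LinearMap.proj s ∘ₗ ExteriorAlgebra.ιInv)

theorem oneFormCoeff_oneForm (f : Fin 3 → S3) (s : Fin 3) : oneFormCoeff s (oneForm f) = f s := by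
  have h (v : Fin 3 → F3) : ExteriorAlgebra.ιInv (ExteriorAlgebra.ι F3 v) = v :=
    ExteriorAlgebra.ι_leftInverse v
  simp [oneForm, oneFormCoeff, yy, h, Pi.single_apply]

theorem oneForm_injective : Function.Injective oneForm := fun f f' h => by
  funext s
  rw [← oneFormCoeff_oneForm f, h, oneFormCoeff_oneForm]

theorem range_oneForm : Set.range oneForm = oneForms := by
  ext z
  constructor
  · rintro ⟨f, rfl⟩
    exact ⟨f 0, f 1, f 2, Fin.sum_univ_three _⟩
  · rintro ⟨f₁, f₂, f₃, rfl⟩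
    exact ⟨![f₁, f₂, f₃], Fin.sum_univ_three _⟩

theorem repL_single (g : G3) (s : Fin 3) :
    repL g (Pi.single s 1) = ∑ r, rep g s r • Pi.single r (1 : F3) := by
  ext r
  simp [repL, Pi.single_apply]

theorem actR_oneForm (g : G3) (f : Fin 3 → S3) :
    actR g (oneForm f) = oneForm fun r => ∑ s, rep g s r • actS g (f s) := by
  have h (s : Fin 3) : ExteriorAlgebra.map (repL g) (yy s) = ∑ r, rep g s r • yy r := by
    simp [yy, repL_single]
  simp only [oneForm, map_sum, actR, Algebra.TensorProduct.map_tmul, h, TensorProduct.tmul_sum,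
    TensorProduct.sum_tmul, TensorProduct.tmul_smul, TensorProduct.smul_tmul']
  exact Finset.sum_comm

theorem actR_oneForm_eq_self_iff {g : G3} {σ : Fin 3} {e : Fin 3 → F3}
    (h : rep g = signedShift σ e) (f : Fin 3 → S3) :
    actR g (oneForm f) = oneForm f ↔
      ∀ s, f (s + σ) = e s • rename (· + σ) (scaleVars e (f s)) := by
  have hcoeff (s : Fin 3) : ∑ t, rep g t (s + σ) • actS g (f t) =
      e s • rename (· + σ) (scaleVars e (f s)) := by
    simp [h, signedShift, actS_of_rep_eq h, ite_smul]
  rw [actR_oneForm, oneForm_injective.eq_iff, funext_iff, ← (Equiv.addRight σ).forall_congr_right]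
  simp only [Equiv.coe_addRight, hcoeff, eq_comm]

/-- The `1`-form with first coefficient `u` that is invariant under the cyclic permutation
`x₁ → x₂ → x₃ → x₁`, `y₁ → y₂ → y₃ → y₁`. -/
noncomputable def cyclicForm (u : S3) : Rf := oneForm fun s => rename (· + s) u

theorem cyclicForm_injective : Function.Injective cyclicForm := fun u u' h => by
  have h0 := congrFun (oneForm_injective h) 0
  rwa [rename_add_zero, rename_add_zero] at h0

theorem actR_cyclicForm {u : S3} (hu : u ∈ relInv) (g : G3) :
    actR g (cyclicForm u) = cyclicForm u := by
  obtain ⟨σ, e, he, hg⟩ := exists_rep_eq_signedShift g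
  refine (actR_oneForm_eq_self_iff hg _).2 fun s => ?_
  have hes : e s • e s • u = u := by rw [smul_smul, ← sq, he.1, one_smul]
  have hu' : scaleVars (e ∘ Equiv.addRight s) u = e s • u := by
    simpa using mem_relInv_iff.1 hu _ (he.comp_equiv (Equiv.addRight s))
  have hρ : (fun t => t + (s + σ)) = (· + σ) ∘ (Equiv.addRight s) :=
    funext fun t => (add_assoc t s σ).symm
  calc rename (· + (s + σ)) u
      = rename (· + σ) (rename (Equiv.addRight s) u) := by rw [hρ, rename_rename]
    _ = e s • rename (· + σ) (rename (Equiv.addRight s) (e s • u)) := by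
      rw [← map_smul, ← map_smul, hes]
    _ = e s • rename (· + σ) (scaleVars e (rename (· + s) u)) := by
      rw [← hu', ← scaleVars_rename]; rfl

theorem exists_cyclicForm_eq {f : Fin 3 → S3} (hf : ∀ g, actR g (oneForm f) = oneForm f) :
    f 0 ∈ relInv ∧ cyclicForm (f 0) = oneForm f := by
  have hcoeff (σ : Fin 3) {e : Fin 3 → F3} (he : IsEvenSign e) :
      f σ = e 0 • rename (· + σ) (scaleVars e (f 0)) := by
    obtain ⟨g, hg⟩ := exists_rep_eq_of_isEvenSign σ he
    simpa using (actR_oneForm_eq_self_iff hg f).1 (hf g) 0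
  constructor
  · refine mem_relInv_iff.2 fun e he => ?_
    have hee : e 0 * e 0 = 1 := by rw [← sq, he.1]
    have h0 := hcoeff 0 he
    rw [rename_add_zero] at h0
    rw [← one_smul F3 (scaleVars e (f 0)), ← hee, mul_smul, ← h0]
  · refine congrArg oneForm (funext fun σ => ?_)
    have h1 : scaleVars 1 (f 0) = f 0 := by simp [scaleVars]
    simpa [h1] using (hcoeff σ (e := 1) ⟨by simp, by simp⟩).symm

theorem cyclicForm_image_relInv :
    cyclicForm '' relInv = oneForms ∩ {z : Rf | ∀ g : G3, actR g z = z} := by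
  ext z
  constructor
  · rintro ⟨u, hu, rfl⟩
    exact ⟨range_oneForm ▸ Set.mem_range_self _, actR_cyclicForm hu⟩
  · rintro ⟨hz, hinv⟩
    obtain ⟨f, rfl⟩ := range_oneForm ▸ hz
    obtain ⟨hf, hcyc⟩ := exists_cyclicForm_eq hinv
    exact ⟨f 0, hf, hcyc⟩

theorem cvec_eq_cyclicForm (i : Fin 6) :
    cvec i = cyclicForm (relGens (X 0) (X 1) (X 2) i) := by
  simp only [cyclicForm, map_relGens, rename_X]
  fin_cases i <;> simp [cvec, c1, c2, c3, c4, c5, c6, oneForm, relGens, Fin.sum_univ_three]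

theorem Phi10_eq_cyclicForm (p : Fin 6 → S3) :
    Phi10 p = cyclicForm (∑ i, aeval av (p i) * relGens (X 0) (X 1) (X 2) i) := by
  have hav (s : Fin 3) : (fun i => rename (· + s) (av i)) = av :=
    funext (rename_equiv_av (Equiv.addRight s))
  have hp (s : Fin 3) (q : S3) : rename (· + s) (aeval av q) = aeval av q := by
    rw [comp_aeval_apply, hav]
  simp only [Phi10, cvec_eq_cyclicForm, cyclicForm, oneForm, map_sum, map_mul, hp, Finset.mul_sum,
    Algebra.TensorProduct.tmul_mul_tmul, one_mul, TensorProduct.sum_tmul]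
  exact Finset.sum_comm

/-- The `G`-invariant `1`-forms form a free `A`-module with basis `{c₁, …, c₆}`: the map
`(p₁,…,p₆) ↦ ∑ᵢ pᵢ(a₁,a₂,a₃)·cᵢ` is injective, with image exactly the set of `G`-fixed
elements of `R` of the form `f₁y₁ + f₂y₂ + f₃y₃`. -/
theorem stmt10 :
    Function.Injective Phi10 ∧
    Set.range Phi10 = oneForms ∩ {z : Rf | ∀ g : G3, actR g z = z} := by
  have hΦ : Phi10 = cyclicForm ∘ fun p => ∑ i, aeval av (p i) * relGens (X 0) (X 1) (X 2) i :=
    funext Phi10_eq_cyclicForm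
  rw [hΦ]
  refine ⟨cyclicForm_injective.comp
    (injective_sum_aeval_mul algebraicIndependent_av linearIndependent_relGens_X), ?_⟩
  rw [Set.range_comp, range_sum_aeval_mul, span_relGens_X_eq_relInv, cyclicForm_image_relInv]
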